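/- Let k be a field, let Y be a retract rational k-variety and let Z be any k-variety. Then any generically injective rational map f : Y ⇢ Z admits a rational section, i.e. a rational map g : Z ⇢ Y such that g ∘ f is defined and coincides with the identity as a rational map. -/

import Mathlib

open AlgebraicGeometry CategoryTheory CategoryTheory.Limits TopologicalSpace

universe u

attribute [local instance] MvPolynomial.gradedAlgebra

noncomputable def ProjSpace (k : Type u) [Field k] (N : ℕ) : Scheme.{u} :=
  Proj (MvPolynomial.homogeneousSubmodule (Fin (N + 1)) k)

noncomputable def ProjSpace.structMap (k : Type u) [Field k] (N : ℕ) :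
    ProjSpace k N ⟶ Spec (CommRingCat.of k) :=
  Proj.toSpecZero _ ≫ Spec.map (CommRingCat.ofHom
    ((GradedRing.projZeroRingHom' (MvPolynomial.homogeneousSubmodule (Fin (N + 1)) k)).comp
      (MvPolynomial.C : k →+* MvPolynomial (Fin (N + 1)) k)))

def AlgebraicGeometry.Scheme.PartialMap.CompEqId {X Y : Scheme.{u}}
    (f : X.PartialMap Y) (g : Y.PartialMap X) : Prop :=
  ∃ (U : X.Opens) (_ : Dense (U : Set X)) (hle : U ≤ f.domain)
    (lift : (U : Scheme.{u}) ⟶ (g.domain : Scheme.{u})),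
      lift ≫ g.domain.ι = X.homOfLE hle ≫ f.hom ∧ lift ≫ g.hom = U.ι

def AlgebraicGeometry.Scheme.PartialMap.IsOverStruct {X Y B : Scheme.{u}}
    (sX : X ⟶ B) (sY : Y ⟶ B) (f : X.PartialMap Y) : Prop :=
  f.hom ≫ sY = f.domain.ι ≫ sX

/-- A scheme `X` with structure morphism `sX` over a field `K` is retract rational if the
identity on `X` factors rationally through some projective space `ℙ^N_K`:  there are
rational (partial) maps `f : X ⤏ ℙ^N` and `g : ℙ^N ⤏ X` over `K` such that `g ∘ f` is
defined and agrees with the identity as a rational map. -/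
def IsRetractRational (K : Type u) [Field K] (X : Scheme.{u})
    (sX : X ⟶ Spec (CommRingCat.of K)) : Prop :=
  ∃ (N : ℕ), 1 ≤ N ∧
    ∃ (f : X.PartialMap (ProjSpace K N)) (g : (ProjSpace K N).PartialMap X),
      f.IsOverStruct sX (ProjSpace.structMap K N) ∧
      g.IsOverStruct (ProjSpace.structMap K N) sX ∧
      f.CompEqId g

/-- Base change of a `k`-scheme along a field extension `k → K`. -/
noncomputable def baseChange {k : Type u} [Field k] (K : Type u) [Field K] [Algebra k K]
    {X : Scheme.{u}} (sX : X ⟶ Spec (CommRingCat.of k)) : Scheme.{u} :=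
  Limits.pullback sX (Spec.map (CommRingCat.ofHom (algebraMap k K)))

/-- The structure morphism of the base change. -/
noncomputable def baseChangeStruct {k : Type u} [Field k] (K : Type u) [Field K] [Algebra k K]
    {X : Scheme.{u}} (sX : X ⟶ Spec (CommRingCat.of k)) :
    baseChange K sX ⟶ Spec (CommRingCat.of K) :=
  Limits.pullback.snd sX (Spec.map (CommRingCat.ofHom (algebraMap k K)))

/-- A `k`-scheme is geometrically retract rational if its base change to an algebraic
closure of `k` is retract rational. -/
def IsGeometricallyRetractRational (k : Type u) [Field k] (X : Scheme.{u})
    (sX : X ⟶ Spec (CommRingCat.of k)) : Prop :=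
  IsRetractRational (AlgebraicClosure k) (baseChange (AlgebraicClosure k) sX)
    (baseChangeStruct (AlgebraicClosure k) sX)

/-- A partial (rational) map `f : X ⤏ Y` is generically injective if on suitable dense open
subsets `U ⊆ X` and `V ⊆ Y` it restricts to a closed embedding `U ↪ V`. -/
def AlgebraicGeometry.Scheme.PartialMap.GenericallyInjective {X Y : Scheme.{u}}
    (f : X.PartialMap Y) : Prop :=
  ∃ (U : X.Opens) (_ : Dense (U : Set X)) (hle : U ≤ f.domain)
    (V : Y.Opens) (_ : Dense (V : Set Y)) (h : (U : Scheme.{u}) ⟶ (V : Scheme.{u})),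
      h ≫ V.ι = X.homOfLE hle ≫ f.hom ∧ IsClosedImmersion h

/-- A `K`-scheme is unirational if it admits a dominant rational map from some
projective space over `K`. -/
def IsUnirational (K : Type u) [Field K] (X : Scheme.{u})
    (sX : X ⟶ Spec (CommRingCat.of K)) : Prop :=
  ∃ (N : ℕ) (g : (ProjSpace K N).PartialMap X),
    g.IsOverStruct (ProjSpace.structMap K N) sX ∧ IsDominant g.hom

/-- Two schemes over a base are birational (over the base) if there are rational maps
between them, over the base, which are mutually inverse as rational maps. -/
def AreBirationalOver {X Y B : Scheme.{u}} (sX : X ⟶ B) (sY : Y ⟶ B) : Prop :=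
  ∃ (f : X.PartialMap Y) (g : Y.PartialMap X),
    f.IsOverStruct sX sY ∧ g.IsOverStruct sY sX ∧ f.CompEqId g ∧ g.CompEqId f

namespace ProjSpace
open HomogeneousLocalization MvPolynomial

variable (k : Type u) [Field k] (N : ℕ) (i : Fin (N + 1))

/-- The coordinate ring of the standard affine chart `X i ≠ 0` of projective space. -/
abbrev ChartRing : Type u :=
  Away (homogeneousSubmodule (Fin (N + 1)) k) (X i)

/-- The inclusion of the constants into the coordinate ring of a standard chart. -/
noncomputable def chartScalars : k →+* ChartRing k N i :=
  (fromZeroRingHom (homogeneousSubmodule (Fin (N + 1)) k) (Submonoid.powers (X i))).comp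
    ((GradedRing.projZeroRingHom' (homogeneousSubmodule (Fin (N + 1)) k)).comp C)

lemma X_mem (j : Fin (N + 1)) :
    (X j : MvPolynomial (Fin (N + 1)) k) ∈ homogeneousSubmodule (Fin (N + 1)) k 1 :=
  isHomogeneous_X k j

lemma val_chartScalars (c : k) : (chartScalars k N i c).val =
    algebraMap (MvPolynomial (Fin (N + 1)) k) _ (C c) := by
  have h : ((GradedRing.projZeroRingHom' (homogeneousSubmodule (Fin (N + 1)) k) (C c) :
      homogeneousSubmodule (Fin (N + 1)) k 0) : MvPolynomial (Fin (N + 1)) k) = C c := by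
    rw [GradedRing.coe_projZeroRingHom'_apply, GradedRing.projZeroRingHom_apply]
    exact DirectSum.decompose_of_mem_same _ (isHomogeneous_C _ c)
  conv_rhs => rw [← Localization.mk_one_eq_algebraMap, ← h]
  rfl

/-- The coordinate function `X j / X i`. -/
noncomputable def chartCoord (j : Fin (N + 1)) : ChartRing k N i :=
  Away.mk _ (X_mem k N i) 1 (X j) (by simpa using X_mem k N j)

lemma chartCoord_self : chartCoord k N i i = 1 := by
  apply val_injective
  simp [chartCoord, Away.val_mk, Localization.mk_self_mk]

lemma eval₂_chartCoord (n : ℕ) (p : MvPolynomial (Fin (N + 1)) k)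
    (hp : p ∈ homogeneousSubmodule (Fin (N + 1)) k (n • 1)) :
    eval₂Hom (chartScalars k N i) (chartCoord k N i) p = Away.mk _ (X_mem k N i) n p hp := by
  apply val_injective
  have hX (j) : (chartCoord k N i j).val * algebraMap (MvPolynomial (Fin (N + 1)) k) _ (X i) =
      algebraMap (MvPolynomial (Fin (N + 1)) k) _ (X j) := by
    rw [chartCoord, Away.val_mk, ← Localization.mk_one_eq_algebraMap,
      ← Localization.mk_one_eq_algebraMap, Localization.mk_mul, Localization.mk_eq_mk_iff,
      Localization.r_iff_exists]
    exact ⟨1, by simp [mul_comm]⟩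
  have key : (eval₂Hom (chartScalars k N i) (chartCoord k N i) p).val
      * algebraMap (MvPolynomial (Fin (N + 1)) k) _ (X i) ^ n =
        algebraMap _ (Localization.Away (X i)) p := by
    rw [← HomogeneousLocalization.algebraMap_apply, coe_eval₂Hom, eval₂_eq, map_sum,
      Finset.sum_mul]
    conv_rhs => rw [p.as_sum, map_sum]
    refine Finset.sum_congr rfl fun d hd ↦ ?_
    have hdeg : ∑ j ∈ d.support, d j = n := by
      have := hp (mem_support_iff.mp hd)
      simpa [Finsupp.weight_apply, Finsupp.sum] using this
    rw [monomial_eq, map_mul, map_mul, map_prod, Finsupp.prod, map_prod,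
      HomogeneousLocalization.algebraMap_apply, val_chartScalars, mul_assoc]
    conv_lhs => rw [← hdeg, ← Finset.prod_pow_eq_pow_sum, ← Finset.prod_mul_distrib]
    congr 1
    refine Finset.prod_congr rfl fun j _ ↦ ?_
    rw [map_pow, map_pow, ← mul_pow, HomogeneousLocalization.algebraMap_apply, hX]
  have hu : IsUnit ((algebraMap _ (Localization.Away (X i : MvPolynomial (Fin (N + 1)) k))
      (X i)) ^ n) :=
    (IsLocalization.Away.algebraMap_isUnit (X i : MvPolynomial (Fin (N + 1)) k)).pow n
  refine hu.mul_right_cancel ?_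
  rw [key, Away.val_mk, ← map_pow (algebraMap (MvPolynomial _ k) _),
    ← Localization.mk_one_eq_algebraMap, ← Localization.mk_one_eq_algebraMap,
    Localization.mk_mul, Localization.mk_eq_mk_iff, Localization.r_iff_exists]
  exact ⟨1, by simp [mul_comm]⟩

/-- The coordinate ring of a standard chart, being a polynomial ring over `k`, has the lifting
property against surjections of `k`-algebras. -/
lemma exists_lift_of_surjective {B B' : Type*} [CommRing B] [CommRing B'] (π : B →+* B')
    (hπ : Function.Surjective π) (φ : ChartRing k N i →+* B') (s : k →+* B)
    (hs : π.comp s = φ.comp (chartScalars k N i)) :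
    ∃ ψ : ChartRing k N i →+* B, π.comp ψ = φ ∧ ψ.comp (chartScalars k N i) = s := by
  classical
  choose b hb using fun j ↦ hπ (φ (chartCoord k N i j))
  let Ψ : MvPolynomial (Fin (N + 1)) k →+* B := eval₂Hom s (Function.update b i 1)
  have hΨi : Ψ (X i) = 1 := by simp [Ψ]
  have hΨ : π.comp Ψ = φ.comp (eval₂Hom (chartScalars k N i) (chartCoord k N i)) := by
    apply MvPolynomial.ringHom_ext
    · intro c
      simpa [Ψ] using RingHom.congr_fun hs c
    · intro j
      obtain rfl | hj := eq_or_ne j i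
      · simp [Ψ, chartCoord_self]
      · simp [Ψ, hj, hb]
  have hu : IsUnit (Ψ (X i)) := hΨi ▸ isUnit_one
  refine ⟨(Localization.awayLift Ψ (X i) hu).comp (algebraMap _ _), ?_, ?_⟩
  · ext x
    obtain ⟨n, p, hp, rfl⟩ := Away.mk_surjective _ (X_mem k N i) x
    rw [← eval₂_chartCoord, ← RingHom.comp_apply, ← RingHom.comp_apply φ, ← hΨ,
      RingHom.comp_apply, RingHom.comp_apply, RingHom.comp_apply, eval₂_chartCoord k N i n p hp,
      HomogeneousLocalization.algebraMap_apply, Away.val_mk]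
    have := Localization.awayLift_mk Ψ (X i) p 1 (by simp [hΨi]) n
    simp only [one_pow, mul_one] at this
    rw [this, RingHom.comp_apply]
  · ext c
    simp [val_chartScalars, Localization.awayLift, Ψ, IsLocalization.Away.lift_eq]

/-- Morphisms over `k` to a standard chart extend along closed immersions into affine schemes. -/
lemma exists_chart_lift (k : Type u) [Field k] (N : ℕ) (i : Fin (N + 1))
    {S T : Scheme.{u}} [IsAffine S] (j : T ⟶ S) [IsClosedImmersion j]
    (sS : S ⟶ Spec (CommRingCat.of k))
    (c : T ⟶ Spec (CommRingCat.of (ChartRing k N i)))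
    (hc : c ≫ Spec.map (CommRingCat.ofHom (chartScalars k N i)) = j ≫ sS) :
    ∃ d : S ⟶ Spec (CommRingCat.of (ChartRing k N i)), j ≫ d = c ∧
      d ≫ Spec.map (CommRingCat.ofHom (chartScalars k N i)) = sS := by
  obtain ⟨_, hj⟩ := IsClosedImmersion.isAffine_surjective_of_isAffine j
  obtain ⟨φ, hφ⟩ := Spec.map_surjective (T.isoSpec.inv ≫ c)
  obtain ⟨s, hs⟩ := Spec.map_surjective (S.isoSpec.inv ≫ sS)
  obtain ⟨ψ, hψ, hψs⟩ := exists_lift_of_surjective k N i j.appTop.hom hj φ.hom s.hom (by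
    have : s ≫ j.appTop = CommRingCat.ofHom (chartScalars k N i) ≫ φ := by
      apply Spec.map_injective
      rw [Spec.map_comp, Spec.map_comp, hφ, hs, Category.assoc, hc,
        ← Scheme.isoSpec_inv_naturality_assoc]
    exact congr($(this).hom))
  refine ⟨S.isoSpec.hom ≫ Spec.map (CommRingCat.ofHom ψ), ?_, ?_⟩
  · rw [← Scheme.isoSpec_hom_naturality_assoc, ← Spec.map_comp]
    have : CommRingCat.ofHom ψ ≫ j.appTop = φ := by ext1; exact hψ
    rw [this, hφ, Iso.hom_inv_id_assoc]
  · rw [Category.assoc, ← Spec.map_comp]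
    have : CommRingCat.ofHom (chartScalars k N i) ≫ CommRingCat.ofHom ψ = s := by ext1; exact hψs
    rw [this, hs, Iso.hom_inv_id_assoc]

/-- The inclusion of the standard affine chart `X i ≠ 0` in projective space. -/
noncomputable def chartι (k : Type u) [Field k] (N : ℕ) (i : Fin (N + 1)) :
    Spec (CommRingCat.of (ChartRing k N i)) ⟶ ProjSpace k N :=
  Proj.awayι (MvPolynomial.homogeneousSubmodule (Fin (N + 1)) k) (MvPolynomial.X i)
    (X_mem k N i) one_pos

instance (k : Type u) [Field k] (N : ℕ) (i : Fin (N + 1)) : IsOpenImmersion (chartι k N i) :=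
  inferInstanceAs (IsOpenImmersion (Proj.awayι _ _ _ _))

lemma chartι_structMap (k : Type u) [Field k] (N : ℕ) (i : Fin (N + 1)) :
    chartι k N i ≫ structMap k N = Spec.map (CommRingCat.ofHom (chartScalars k N i)) := by
  exact (Proj.awayι_toSpecZero_assoc _ _ _ _ _).trans (Spec.map_comp _ _).symm

lemma exists_mem_opensRange_chartι (k : Type u) [Field k] (N : ℕ) (x : ProjSpace k N) :
    ∃ i, x ∈ (chartι k N i).opensRange := by
  have h := Proj.iSup_basicOpen_eq_top' (MvPolynomial.homogeneousSubmodule (Fin (N + 1)) k)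
    (MvPolynomial.X : Fin (N + 1) → _) (fun i ↦ ⟨1, X_mem k N i⟩) (by
      refine top_le_iff.mp fun p _ ↦ ?_
      induction p using MvPolynomial.induction_on with
      | C c =>
        exact Subalgebra.algebraMap_mem _
          (⟨MvPolynomial.C c, MvPolynomial.isHomogeneous_C _ c⟩ :
            MvPolynomial.homogeneousSubmodule (Fin (N + 1)) k 0)
      | add p q hp hq => exact add_mem (hp trivial) (hq trivial)
      | mul_X p i hp =>
        exact mul_mem (hp trivial) (Algebra.subset_adjoin (Set.mem_range_self i)))
  obtain ⟨i, hi⟩ := TopologicalSpace.Opens.mem_iSup.mp (h.ge (Set.mem_univ x))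
  exact ⟨i, (Proj.opensRange_awayι _ _ (X_mem k N i) one_pos).ge hi⟩

end ProjSpace

namespace AlgebraicGeometry.Scheme

lemma exists_partialMap_of_isOpenImmersion {X Y B : Scheme.{u}} [IrreducibleSpace X]
    (sX : X ⟶ B) (sY : Y ⟶ B) {W : Scheme.{u}} [Nonempty W] (j : W ⟶ X) [IsOpenImmersion j]
    (m : W ⟶ Y) (hm : m ≫ sY = j ≫ sX) :
    ∃ (g : X.PartialMap Y) (e : W ⟶ g.domain), g.IsOverStruct sX sY ∧
      e ≫ g.domain.ι = j ∧ e ≫ g.hom = m := by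
  refine ⟨⟨j.opensRange, j.opensRange.2.dense (Set.range_nonempty _), j.isoOpensRange.inv ≫ m⟩,
    j.isoOpensRange.hom, ?_, ?_, ?_⟩
  · simp [PartialMap.IsOverStruct, hm]
  · simp
  · simp

lemma PartialMap.CompEqId.of_isOpenImmersion {X Y : Scheme.{u}} [IrreducibleSpace X]
    (f : X.PartialMap Y) (g : Y.PartialMap X) {T : Scheme.{u}} [Nonempty T] (t : T ⟶ X)
    [IsOpenImmersion t] (t' : T ⟶ f.domain) (ht' : t' ≫ f.domain.ι = t) (l : T ⟶ g.domain)
    (hl : l ≫ g.domain.ι = t' ≫ f.hom) (hlg : l ≫ g.hom = t) : f.CompEqId g := by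
  have hle : t.opensRange ≤ f.domain := by
    rintro _ ⟨x, rfl⟩
    rw [← ht']
    exact (t' x).2
  refine ⟨t.opensRange, t.opensRange.2.dense (Set.range_nonempty _), hle,
    t.isoOpensRange.inv ≫ l, ?_, ?_⟩
  · have : t.isoOpensRange.inv ≫ t' = X.homOfLE hle := by
      simp [← cancel_mono f.domain.ι, ht']
    rw [Category.assoc, hl, reassoc_of% this]
  · simp [hlg]

end AlgebraicGeometry.Scheme

/-- **Remark after Lemma 1.**  Let `k` be a field, `Y` a retract rational `k`-variety and
`Z` any `k`-variety.  Then any generically injective rational map `f : Y ⇢ Z` admits a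
rational section, i.e. a rational map `g : Z ⇢ Y` over `k` such that `g ∘ f` is defined
and coincides with the identity as a rational map. -/
theorem section_of_genericallyInjective_to_variety
    (k : Type u) [Field k] (Y : Scheme.{u}) (sY : Y ⟶ Spec (CommRingCat.of k))
    [IsIntegral Y] [LocallyOfFiniteType sY] [QuasiCompact sY] [IsSeparated sY]
    (Z : Scheme.{u}) (sZ : Z ⟶ Spec (CommRingCat.of k))
    [IsIntegral Z] [LocallyOfFiniteType sZ] [QuasiCompact sZ] [IsSeparated sZ]
    (hY : IsRetractRational k Y sY)
    (f : Y.PartialMap Z) (hf : f.IsOverStruct sY sZ)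
    (hinj : f.GenericallyInjective) :
    ∃ g : Z.PartialMap Y, g.IsOverStruct sZ sY ∧ f.CompEqId g := by
  obtain ⟨N, -, a, b, _, hb, U₁, hU₁, _, r, _, hrb⟩ := hY
  obtain ⟨U, hU, hUle, V, -, h, hh, _⟩ := hinj
  obtain ⟨y, hyU, hyU₁⟩ := hU₁.inter_open_nonempty U U.2 hU.nonempty
  have hrb' : (r ≫ b.domain.ι) ≫ ProjSpace.structMap k N = U₁.ι ≫ sY := by
    have hb' : b.hom ≫ sY = b.domain.ι ≫ ProjSpace.structMap k N := hb
    rw [Category.assoc, ← hb', ← Category.assoc, hrb]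
  obtain ⟨i, hi⟩ := ProjSpace.exists_mem_opensRange_chartι k N ((r ≫ b.domain.ι) ⟨y, hyU₁⟩)
  -- Shrink to an affine open of `V` over which `U` is mapped to a single chart.
  let U₂ : Y.Opens := U₁.ι ''ᵁ ((r ≫ b.domain.ι) ⁻¹ᵁ (ProjSpace.chartι k N i).opensRange)
  have hyU₂ : y ∈ U₂ := ⟨⟨y, hyU₁⟩, hi, rfl⟩
  obtain ⟨V₂, hV₂, hV₂U⟩ := h.isClosedEmbedding.isInducing.isOpen_iff.mp (U.ι ⁻¹ᵁ U₂).2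
  have hyV₂ : h ⟨y, hyU⟩ ∈ V₂ := by
    have : (⟨y, hyU⟩ : U) ∈ h ⁻¹' V₂ := hV₂U ▸ hyU₂
    exact this
  obtain ⟨S, hS, hyS, hSV₂⟩ := exists_isAffineOpen_mem_and_subset (U := ⟨V₂, hV₂⟩) hyV₂
  have : IsAffine S := hS
  let j := h ∣_ S
  let t' : (h ⁻¹ᵁ S).toScheme ⟶ U := (h ⁻¹ᵁ S).ι
  have hj : j ≫ S.ι = t' ≫ h := morphismRestrict_ι h S
  let t := t' ≫ U.ι
  have : Nonempty (h ⁻¹ᵁ S).toScheme := ⟨⟨⟨y, hyU⟩, hyS⟩⟩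
  have htU₂ (x : (h ⁻¹ᵁ S).toScheme) : t x ∈ U₂ := by
    have : x.1 ∈ h ⁻¹' V₂ := hSV₂ x.2
    rw [hV₂U] at this
    exact this
  let t₁ : (h ⁻¹ᵁ S).toScheme ⟶ U₁ := IsOpenImmersion.lift U₁.ι t (by
    rintro _ ⟨x, rfl⟩
    obtain ⟨z, -, hz⟩ := htU₂ x
    exact ⟨z, hz⟩)
  have ht₁ : t₁ ≫ U₁.ι = t := IsOpenImmersion.lift_fac _ _ _
  let c : (h ⁻¹ᵁ S).toScheme ⟶ _ :=
    IsOpenImmersion.lift (ProjSpace.chartι k N i) (t₁ ≫ r ≫ b.domain.ι) (by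
      rintro _ ⟨x, rfl⟩
      obtain ⟨z, hz, hzt⟩ := htU₂ x
      have : t₁ x = z := U₁.ι.isOpenEmbedding.injective (by
        rw [← Scheme.Hom.comp_apply, ht₁]
        exact hzt.symm)
      have hz' : (r ≫ b.domain.ι) (t₁ x) ∈ (ProjSpace.chartι k N i).opensRange := this ▸ hz
      exact hz')
  have hc : c ≫ ProjSpace.chartι k N i = t₁ ≫ r ≫ b.domain.ι := IsOpenImmersion.lift_fac _ _ _
  have hjt : j ≫ S.ι ≫ V.ι = t' ≫ Y.homOfLE hUle ≫ f.hom := by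
    rw [reassoc_of% hj, hh]
  have hf' : f.hom ≫ sZ = f.domain.ι ≫ sY := hf
  obtain ⟨d, hjd, hd⟩ := ProjSpace.exists_chart_lift k N i j (S.ι ≫ V.ι ≫ sZ) c (by
    rw [← ProjSpace.chartι_structMap, reassoc_of% hc, ← Category.assoc r, hrb', reassoc_of% ht₁,
      reassoc_of% hjt, hf']
    simp [t])
  -- The section is `b` composed with the chart-valued map `d`.
  let e := d ≫ ProjSpace.chartι k N i
  have hje : j ≫ e = t₁ ≫ r ≫ b.domain.ι := by rw [← hc, ← hjd, Category.assoc]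
  let W := e ⁻¹ᵁ b.domain
  let l : (h ⁻¹ᵁ S).toScheme ⟶ W := IsOpenImmersion.lift W.ι j (by
    rintro _ ⟨x, rfl⟩
    have : (j ≫ e) x ∈ b.domain := by
      rw [hje]
      exact (r (t₁ x)).2
    simpa [W] using this)
  have hl : l ≫ W.ι = j := IsOpenImmersion.lift_fac _ _ _
  have hlr : l ≫ e ∣_ b.domain = t₁ ≫ r := by
    rw [← cancel_mono b.domain.ι, Category.assoc, morphismRestrict_ι, reassoc_of% hl, hje,
      Category.assoc]
  have : Nonempty W.toScheme := ⟨l (Classical.arbitrary _)⟩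
  obtain ⟨g, q, hg, hqι, hqg⟩ := Scheme.exists_partialMap_of_isOpenImmersion sZ sY
    (W.ι ≫ S.ι ≫ V.ι) (e ∣_ b.domain ≫ b.hom) (by
      have hb' : b.hom ≫ sY = b.domain.ι ≫ ProjSpace.structMap k N := hb
      rw [Category.assoc, hb', ← Category.assoc, morphismRestrict_ι]
      simp only [e, W, Category.assoc, ProjSpace.chartι_structMap, hd])
  refine ⟨g, hg, .of_isOpenImmersion f g t (t' ≫ Y.homOfLE hUle) (by simp [t]) (l ≫ q) ?_ ?_⟩
  · rw [Category.assoc, hqι, reassoc_of% hl, hjt, Category.assoc]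
  · rw [Category.assoc, hqg, reassoc_of% hlr, hrb, ht₁]
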